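/- Let Ψ be an automorphism of F₂ × ℤ, where F₂ is the free group on two generators a, b. Then there exist an automorphism Φ of F₂ × ℤ and an element h ∈ F₂ × ℤ such that: (i) Φ(x) = h⁻¹·Ψ²(x)·h for all x (so [Φ] = [Ψ²] in Out(F₂ × ℤ)); (ii) Φ(1, n) = (1, n) for all n ∈ ℤ (Φ fixes the central ℤ factor pointwise); and (iii) the induced automorphism φ of F₂, defined by φ(g) = fst(Φ(g, 0)), fixes the commutator: φ([a,b]) = [a,b], where [a,b] = a⁻¹b⁻¹ab. -/

import Mathlib

/-- The group `F₂ × ℤ`. -/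
abbrev F2xZ : Type := FreeGroup (Fin 2) × Multiplicative ℤ

/-- The two generators of `F₂`. -/
def genA : FreeGroup (Fin 2) := FreeGroup.of 0
def genB : FreeGroup (Fin 2) := FreeGroup.of 1

namespace F2Nielsen

/-- shorthand for the free group of rank two -/
abbrev G : Type := FreeGroup (Fin 2)

/-- first letter of the reduced word -/
def hd (g : G) : Option (Fin 2 × Bool) := g.toWord.head?

/-- the element given by one letter -/
def lt (s : Fin 2 × Bool) : G := FreeGroup.mk [s]

lemma toWord_lt (s : Fin 2 × Bool) : (lt s).toWord = [s] := by
  simp [lt, FreeGroup.toWord_mk]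

lemma hd_lt (s : Fin 2 × Bool) : hd (lt s) = some s := by simp [hd, toWord_lt]

lemma norm_lt (s : Fin 2 × Bool) : (lt s).norm = 1 := by simp [FreeGroup.norm, toWord_lt]

lemma lt_inv (s : Fin 2 × Bool) : (lt s)⁻¹ = lt (s.1, !s.2) := by
  simp [lt, FreeGroup.inv_mk, FreeGroup.invRev]

lemma lt_ne_one (s : Fin 2 × Bool) : lt s ≠ 1 := by
  intro h
  have := norm_lt s
  rw [h] at this
  simp at this

lemma hd_one : hd 1 = none := by simp [hd]

lemma hd_eq_none {g : G} : hd g = none ↔ g = 1 := by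
  simp [hd]

lemma hd_inv (g : G) : hd g⁻¹ = g.toWord.getLast?.map (fun s => (s.1, !s.2)) := by
  simp [hd, FreeGroup.toWord_inv, FreeGroup.invRev]

/-- no cancellation -/
lemma toWord_mul_of {g h : G} (hne : g ≠ 1 → h ≠ 1 → hd g⁻¹ ≠ hd h) :
    (g * h).toWord = g.toWord ++ h.toWord := by
  rw [FreeGroup.toWord_mul]
  apply FreeGroup.IsReduced.reduce_eq
  unfold FreeGroup.IsReduced
  rw [List.isChain_append]
  refine ⟨FreeGroup.isReduced_toWord, FreeGroup.isReduced_toWord, ?_⟩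
  intro x hx y hy hxy
  by_contra hc
  have h1 : g ≠ 1 := by rintro rfl; simp at hx
  have h2 : h ≠ 1 := by rintro rfl; simp at hy
  apply hne h1 h2
  rw [hd_inv, hd]
  rw [Option.mem_def] at hx hy
  rw [hx, hy]
  simp only [Option.map_some, Option.some.injEq]
  ext
  · simp [hxy]
  · cases hx2 : x.2 <;> cases hy2 : y.2 <;> simp_all

lemma norm_mul_of {g h : G} (hne : g ≠ 1 → h ≠ 1 → hd g⁻¹ ≠ hd h) :
    (g * h).norm = g.norm + h.norm := by
  simp [FreeGroup.norm, toWord_mul_of hne]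

lemma hd_mul_of {g h : G} (hg : g ≠ 1) (hne : hd g⁻¹ ≠ hd h) : hd (g * h) = hd g := by
  rw [hd, toWord_mul_of (fun _ _ => hne), hd]
  have : g.toWord ≠ [] := by simpa using hg
  obtain ⟨a, l, h⟩ := List.exists_cons_of_ne_nil this
  simp [h]

lemma hd_inv_mul_of {g h : G} (hh : h ≠ 1) (hne : hd g⁻¹ ≠ hd h) :
    hd (g * h)⁻¹ = hd h⁻¹ := by
  rw [mul_inv_rev]
  apply hd_mul_of (by simpa using hh)
  rw [inv_inv]
  exact hne.symm

lemma norm_pos {g : G} (hg : g ≠ 1) : 0 < g.norm := by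
  rw [Nat.pos_iff_ne_zero]; simpa using hg

lemma mul_ne_one_of {g h : G} (hg : g ≠ 1) (hne : hd g⁻¹ ≠ hd h) : g * h ≠ 1 := by
  intro h1
  have := norm_mul_of (fun _ _ => hne)
  rw [h1] at this
  have := norm_pos hg
  simp at *
  omega

/-- splitting off the first letter -/
lemma split {g : G} {s : Fin 2 × Bool} (h : hd g = some s) :
    ∃ g', g = lt s * g' ∧ g.norm = g'.norm + 1 ∧ hd (lt s)⁻¹ ≠ hd g' := by
  have hw : ∃ l, g.toWord = s :: l := by
    rw [hd] at h
    cases hh : g.toWord with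
    | nil => simp [hh] at h
    | cons a l => simp [hh] at h; exact ⟨l, by rw [h]⟩
  obtain ⟨l, hl⟩ := hw
  have hr : FreeGroup.IsReduced (s :: l) := hl ▸ FreeGroup.isReduced_toWord
  have hr' : FreeGroup.IsReduced l := hr.infix ⟨[s], [], by simp⟩
  have hlw : (FreeGroup.mk l : G).toWord = l := by rw [FreeGroup.toWord_mk, hr'.reduce_eq]
  refine ⟨FreeGroup.mk l, ?_, ?_, ?_⟩
  · rw [← FreeGroup.mk_toWord (x := g), hl, lt, FreeGroup.mul_mk]; rfl
  · simp [FreeGroup.norm, hl, hlw]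
  · rw [lt_inv, hd_lt, hd, hlw]
    cases l with
    | nil => simp
    | cons a l =>
      rw [FreeGroup.isReduced_cons_cons] at hr
      simp only [List.head?_cons, ne_eq, Option.some.injEq]
      rintro rfl
      have := hr.1
      simp at this

lemma norm_lt_inv_mul {g : G} {s : Fin 2 × Bool} (h : hd g = some s) :
    ((lt s)⁻¹ * g).norm + 1 = g.norm := by
  obtain ⟨g', h1, h2, -⟩ := split h
  rw [h2, h1]; simp

lemma norm_lt_inv_mul_le (g : G) (s : Fin 2 × Bool) :
    ((lt s)⁻¹ * g).norm ≤ g.norm + 1 := by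
  have := FreeGroup.norm_mul_le (lt s)⁻¹ g
  rw [FreeGroup.norm_inv_eq, norm_lt] at this
  omega

lemma eq_lt_of_norm {g : G} (h : g.norm = 1) : ∃ s, g = lt s := by
  have hne : g ≠ 1 := by rintro rfl; simp at h
  obtain ⟨s, hs⟩ := Option.ne_none_iff_exists'.1 (fun h => hne (hd_eq_none.1 h))
  obtain ⟨g', h1, h2, -⟩ := split hs
  have : g' = 1 := by rw [← FreeGroup.norm_eq_zero]; omega
  exact ⟨s, by simpa [this] using h1⟩

lemma hd_lt_inv_ne (s : Fin 2 × Bool) : hd (lt s)⁻¹ ≠ hd (lt s) := by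
  rw [lt_inv, hd_lt, hd_lt]
  intro h
  simp [Prod.ext_iff] at h

lemma pow_hd (N : ℕ) : ∀ v : G, v.norm ≤ N → v ≠ 1 → ∀ n : ℕ,
    v ^ (n + 1) ≠ 1 ∧ hd (v ^ (n + 1)) = hd v ∧ v.norm ≤ (v ^ (n + 1)).norm := by
  induction N with
  | zero => intro v hv h1; simp at hv; exact absurd hv h1
  | succ N ih =>
    intro v hv h1 n
    by_cases hc : hd v⁻¹ = hd v
    · obtain ⟨s, hs⟩ := Option.ne_none_iff_exists'.1 (fun h => h1 (hd_eq_none.1 h))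
      obtain ⟨v1, e1, n1, c1⟩ := split hs
      have hv1 : v1 ≠ 1 := by
        rintro rfl
        rw [mul_one] at e1
        subst e1
        exact hd_lt_inv_ne s hc
      have hs1 : hd v1⁻¹ = some s := by
        rw [← hd_inv_mul_of hv1 c1, ← e1, hc, hs]
      obtain ⟨v2, e2, n2, c2⟩ := split hs1
      rw [FreeGroup.norm_inv_eq] at n2
      have e3 : v1 = v2⁻¹ * (lt s)⁻¹ := by rw [← mul_inv_rev, ← e2, inv_inv]
      have e : v = lt s * v2⁻¹ * (lt s)⁻¹ := by rw [e1, e3, mul_assoc]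
      have hv2 : v2⁻¹ ≠ 1 := by
        intro h; apply h1; rw [e, h]; simp
      have ih1 := ih v2⁻¹ (by rw [FreeGroup.norm_inv_eq]; omega) hv2 n
      have ih2 := ih v2 (by omega) (by simpa using hv2) n
      have hvp : v ^ (n + 1) = lt s * (v2⁻¹ ^ (n + 1)) * (lt s)⁻¹ := by rw [e, conj_pow]
      have h4 : hd (lt s)⁻¹ ≠ hd (v2⁻¹ ^ (n+1)) := by
        rw [ih1.2.1]
        rw [e3, hd_mul_of hv2 (by rw [inv_inv]; exact c2.symm)] at c1
        exact c1
      have h5 : hd (lt s * (v2⁻¹ ^ (n+1)))⁻¹ ≠ hd (lt s)⁻¹ := by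
        rw [hd_inv_mul_of ih1.1 h4, ← inv_pow, inv_inv, ih2.2.1]
        exact c2.symm
      have h6 := mul_ne_one_of (lt_ne_one s) h4
      rw [hvp]
      refine ⟨mul_ne_one_of h6 h5, ?_, ?_⟩
      · rw [hd_mul_of h6 h5, hd_mul_of (lt_ne_one s) h4, hd_lt, hs]
      · rw [norm_mul_of (fun _ _ => h5), norm_mul_of (fun _ _ => h4), FreeGroup.norm_inv_eq, norm_lt]
        have := ih1.2.2
        rw [FreeGroup.norm_inv_eq] at this
        omega
    · induction n with
      | zero => simpa using h1
      | succ n ihn =>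
        rw [pow_succ']
        have hc' : hd v⁻¹ ≠ hd (v ^ (n + 1)) := by rw [ihn.2.1]; exact hc
        refine ⟨mul_ne_one_of h1 hc', hd_mul_of h1 hc', ?_⟩
        rw [norm_mul_of (fun _ _ => hc')]
        omega

lemma zpow_hd {v : G} (h1 : v ≠ 1) {k : ℤ} (hk : k ≠ 0) :
    v ^ k ≠ 1 ∧ (hd (v ^ k) = hd v ∨ hd (v ^ k) = hd v⁻¹) ∧ v.norm ≤ (v ^ k).norm := by
  rcases lt_trichotomy k 0 with h | h | h
  · obtain ⟨n, rfl⟩ : ∃ n : ℕ, k = -((n + 1 : ℕ) : ℤ) := ⟨(-k - 1).toNat, by omega⟩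
    have := pow_hd _ v⁻¹ le_rfl (by simpa using h1) n
    rw [FreeGroup.norm_inv_eq] at this
    rw [zpow_neg, zpow_natCast, ← inv_pow]
    exact ⟨this.1, Or.inr this.2.1, this.2.2⟩
  · exact absurd h hk
  · obtain ⟨n, rfl⟩ : ∃ n : ℕ, k = ((n + 1 : ℕ) : ℤ) := ⟨(k - 1).toNat, by omega⟩
    have := pow_hd _ v le_rfl h1 n
    rw [zpow_natCast]
    exact ⟨this.1, Or.inl this.2.1, this.2.2⟩

/-- nonempty reduced paths in a theta graph, starting with the edge `t i` backwards -/
inductive Th (t : Fin 3 → G) : Fin 3 → G → Prop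
  | base (i j : Fin 3) (hij : i ≠ j) : Th t i ((t i)⁻¹ * t j)
  | cons (i j k : Fin 3) (g : G) (hij : i ≠ j) (hjk : j ≠ k) (hg : Th t k g) :
      Th t i ((t i)⁻¹ * t j * g)

lemma Th.mul {t : Fin 3 → G} {k : Fin 3} {g : G} (h : Th t k g) (i j : Fin 3) :
    (t i)⁻¹ * t j * g = 1 ∨ ∃ l, Th t l ((t i)⁻¹ * t j * g) := by
  by_cases hij : i = j
  · subst hij; right; exact ⟨k, by simpa using h⟩
  by_cases hjk : j = k
  · subst hjk
    cases h with
    | base _ l hl =>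
      have e : (t i)⁻¹ * t j * ((t j)⁻¹ * t l) = (t i)⁻¹ * t l := by group
      rw [e]
      by_cases hil : i = l
      · left; simp [hil]
      · right; exact ⟨i, Th.base i l hil⟩
    | cons _ l m g' hl hlm hg =>
      have e : (t i)⁻¹ * t j * ((t j)⁻¹ * t l * g') = (t i)⁻¹ * t l * g' := by group
      rw [e]
      right
      by_cases hil : i = l
      · exact ⟨m, by simpa [hil] using hg⟩
      · exact ⟨i, Th.cons i l m g' hil hlm hg⟩
  · right; exact ⟨i, Th.cons i j k g hij hjk h⟩

lemma Th.prop {t : Fin 3 → G} (h1 : ∀ i, t i ≠ 1)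
    (ha : ∀ i j, i ≠ j → hd (t i) ≠ hd (t j))
    (hb : ∀ i j, i ≠ j → hd (t i)⁻¹ ≠ hd (t j)⁻¹) {i : Fin 3} {g : G} (h : Th t i g) :
    g ≠ 1 ∧ hd g = hd (t i)⁻¹ ∧ 2 ≤ g.norm := by
  have key : ∀ i j, i ≠ j → (t i)⁻¹ * t j ≠ 1 ∧ hd ((t i)⁻¹ * t j) = hd (t i)⁻¹ ∧
      2 ≤ ((t i)⁻¹ * t j).norm ∧ hd ((t i)⁻¹ * t j)⁻¹ = hd (t j)⁻¹ := by
    intro i j hij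
    have hi : (t i)⁻¹ ≠ 1 := by simpa using h1 i
    have hc : hd ((t i)⁻¹)⁻¹ ≠ hd (t j) := by rw [inv_inv]; exact ha i j hij
    refine ⟨mul_ne_one_of hi hc, hd_mul_of hi hc, ?_, hd_inv_mul_of (h1 j) hc⟩
    rw [norm_mul_of (fun _ _ => hc)]
    have := norm_pos hi
    have := norm_pos (h1 j)
    omega
  induction h with
  | base i j hij => exact ⟨(key i j hij).1, (key i j hij).2.1, (key i j hij).2.2.1⟩
  | cons i j k g hij hjk hg ih =>
    obtain ⟨k1, k2, k3, k4⟩ := key i j hij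
    have hc : hd ((t i)⁻¹ * t j)⁻¹ ≠ hd g := by rw [k4, ih.2.1]; exact hb j k hjk
    refine ⟨mul_ne_one_of k1 hc, by rw [hd_mul_of k1 hc, k2], ?_⟩
    rw [norm_mul_of (fun _ _ => hc)]
    omega

lemma theta_false {t : Fin 3 → G} (h1 : ∀ i, t i ≠ 1)
    (ha : ∀ i j, i ≠ j → hd (t i) ≠ hd (t j))
    (hb : ∀ i j, i ≠ j → hd (t i)⁻¹ ≠ hd (t j)⁻¹)
    (hcl : Subgroup.closure {(t 0)⁻¹ * t 1, (t 0)⁻¹ * t 2} = ⊤) : False := by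
  have all : ∀ g : G, g = 1 ∨ ∃ i, Th t i g := by
    have step : ∀ i j, ∀ y : G, (y = 1 ∨ ∃ i, Th t i y) →
        ((t i)⁻¹ * t j * y = 1 ∨ ∃ k, Th t k ((t i)⁻¹ * t j * y)) := by
      intro i j y hy
      rcases hy with rfl | ⟨k, hk⟩
      · by_cases hij : i = j
        · left; simp [hij]
        · right; exact ⟨i, by simpa using Th.base i j hij⟩
      · exact hk.mul i j
    intro g
    have hg : g ∈ Subgroup.closure {(t 0)⁻¹ * t 1, (t 0)⁻¹ * t 2} := by rw [hcl]; trivial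
    induction hg using Subgroup.closure_induction_left with
    | one => left; rfl
    | mul_left x hx y hy ih =>
      rcases hx with rfl | rfl
      · exact step 0 1 y ih
      · exact step 0 2 y ih
    | inv_mul_cancel x hx y hy ih =>
      rcases hx with rfl | rfl
      · rw [mul_inv_rev, inv_inv]; exact step 1 0 y ih
      · rw [mul_inv_rev, inv_inv]; exact step 2 0 y ih
  rcases all (lt (0, true)) with h | ⟨i, h⟩
  · exact lt_ne_one _ h
  · have := (h.prop h1 ha hb).2.2
    rw [norm_lt] at this
    omega

/-- nonempty alternating products of powers -/
inductive Rs (v : Bool → G) : Bool → G → Prop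
  | base (i : Bool) (k : ℤ) (hk : k ≠ 0) : Rs v i (v i ^ k)
  | cons (i : Bool) (k : ℤ) (g : G) (hk : k ≠ 0) (hg : Rs v (!i) g) : Rs v i (v i ^ k * g)

lemma Rs.mul {v : Bool → G} {j : Bool} {g : G} (h : Rs v j g) (i : Bool) (k : ℤ) :
    v i ^ k * g = 1 ∨ ∃ l, Rs v l (v i ^ k * g) := by
  by_cases hk : k = 0
  · subst hk; right; exact ⟨j, by simpa using h⟩
  by_cases hij : i = j
  · subst hij
    cases h with
    | base _ l hl =>
      rw [← zpow_add]
      by_cases hkl : k + l = 0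
      · left; simp [hkl]
      · right; exact ⟨i, Rs.base i _ hkl⟩
    | cons _ l g' hl hg =>
      rw [← mul_assoc, ← zpow_add]
      right
      by_cases hkl : k + l = 0
      · exact ⟨!i, by simpa [hkl] using hg⟩
      · exact ⟨i, Rs.cons i _ g' hkl hg⟩
  · right
    have : j = !i := by cases i <;> cases j <;> simp_all
    subst this
    exact ⟨i, Rs.cons i k g hk h⟩

lemma Rs.prop {v : Bool → G} (h1 : ∀ i, v i ≠ 1)
    (ha : ∀ i, hd (v i) ≠ hd (v (!i)) ∧ hd (v i)⁻¹ ≠ hd (v (!i)) ∧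
      hd (v i) ≠ hd (v (!i))⁻¹ ∧ hd (v i)⁻¹ ≠ hd (v (!i))⁻¹) {i : Bool} {g : G} (h : Rs v i g) :
    g ≠ 1 ∧ (hd g = hd (v i) ∨ hd g = hd (v i)⁻¹) ∧
      (g.norm = 1 → ∃ k : ℤ, k ≠ 0 ∧ g = v i ^ k) := by
  induction h with
  | base i k hk =>
    obtain ⟨a, b, c⟩ := zpow_hd (h1 i) hk
    exact ⟨a, b, fun _ => ⟨k, hk, rfl⟩⟩
  | cons i k g hk hg ih =>
    obtain ⟨a, b, c⟩ := zpow_hd (h1 i) hk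
    have b' := (zpow_hd (h1 i) (neg_ne_zero.2 hk)).2.1
    rw [zpow_neg] at b'
    obtain ⟨x1, x2, x3⟩ := ih
    have hc : hd (v i ^ k)⁻¹ ≠ hd g := by
      obtain ⟨y1, y2, y3, y4⟩ := ha i
      rcases b' with e | e <;> rcases x2 with f | f <;> rw [e, f] <;> assumption
    refine ⟨mul_ne_one_of a hc, by rw [hd_mul_of a hc]; exact b, ?_⟩
    rw [norm_mul_of (fun _ _ => hc)]
    have := norm_pos a
    have := norm_pos x1
    intro _
    omega

lemma rose {v : Bool → G} (h1 : ∀ i, v i ≠ 1)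
    (ha : ∀ i, hd (v i) ≠ hd (v (!i)) ∧ hd (v i)⁻¹ ≠ hd (v (!i)) ∧
      hd (v i) ≠ hd (v (!i))⁻¹ ∧ hd (v i)⁻¹ ≠ hd (v (!i))⁻¹)
    (hcl : Subgroup.closure {v false, v true} = ⊤) (s : Fin 2 × Bool) :
    ∃ i, lt s = v i ∨ lt s = (v i)⁻¹ := by
  have all : ∀ g : G, g = 1 ∨ ∃ i, Rs v i g := by
    have step : ∀ i (k : ℤ), ∀ y : G, (y = 1 ∨ ∃ i, Rs v i y) →
        (v i ^ k * y = 1 ∨ ∃ l, Rs v l (v i ^ k * y)) := by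
      intro i k y hy
      rcases hy with rfl | ⟨l, hl⟩
      · by_cases hk : k = 0
        · left; simp [hk]
        · right; exact ⟨i, by simpa using Rs.base i k hk⟩
      · exact hl.mul i k
    have step1 := fun i => step i 1
    have step2 := fun i => step i (-1)
    simp only [zpow_one, zpow_neg] at step1 step2
    intro g
    have hg : g ∈ Subgroup.closure {v false, v true} := by rw [hcl]; trivial
    induction hg using Subgroup.closure_induction_left with
    | one => left; rfl
    | mul_left x hx y hy ih =>
      rcases hx with rfl | rfl <;> exact step1 _ y ih
    | inv_mul_cancel x hx y hy ih =>
      rcases hx with rfl | rfl <;> exact step2 _ y ih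
  rcases all (lt s) with h | ⟨i, h⟩
  · exact absurd h (lt_ne_one _)
  · obtain ⟨k, hk, e⟩ := (h.prop h1 ha).2.2 (norm_lt s)
    obtain ⟨-, b, c⟩ := zpow_hd (h1 i) hk
    rw [← e, norm_lt] at c
    obtain ⟨r, hr⟩ := eq_lt_of_norm (g := v i) (by have := norm_pos (h1 i); omega)
    refine ⟨i, ?_⟩
    rw [← e, hr, lt_inv, hd_lt, hd_lt, hd_lt, Option.some.injEq, Option.some.injEq] at b
    rw [hr, lt_inv]
    rcases b with b | b
    · left; rw [b]
    · right; rw [← b]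

/-- commutator -/
def cm (x y : G) : G := x⁻¹ * y⁻¹ * x * y

/-- generating pair with commutator conjugate to `C` up to inversion -/
def P (C x y : G) : Prop :=
  Subgroup.closure {x, y} = ⊤ ∧ (IsConj C (cm x y) ∨ IsConj C (cm x y)⁻¹)

lemma closure_top {x y x' y' : G} (h : Subgroup.closure {x, y} = ⊤)
    (hx : x ∈ Subgroup.closure {x', y'}) (hy : y ∈ Subgroup.closure {x', y'}) :
    Subgroup.closure {x', y'} = (⊤ : Subgroup G) := by
  rw [eq_top_iff, ← h, Subgroup.closure_le]
  rintro z (rfl | rfl) <;> assumption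

lemma mem1 (x y : G) : x ∈ Subgroup.closure {x, y} := Subgroup.subset_closure (by simp)
lemma mem2 (x y : G) : y ∈ Subgroup.closure {x, y} := Subgroup.subset_closure (by simp)

lemma conj_inv {x y : G} (h : IsConj x y) : IsConj x⁻¹ y⁻¹ := by
  rw [isConj_iff] at *
  obtain ⟨c, rfl⟩ := h
  exact ⟨c, by group⟩

lemma P.of_inv {C x y x' y' : G} (h : P C x y) (hc : Subgroup.closure {x', y'} = (⊤ : Subgroup G))
    (hi : IsConj (cm x y)⁻¹ (cm x' y')) : P C x' y' := by
  refine ⟨hc, ?_⟩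
  rcases h.2 with h | h
  · right
    have := conj_inv hi
    rw [inv_inv] at this
    exact h.trans this
  · left; exact h.trans hi

lemma P.swap {C x y : G} (h : P C x y) : P C y x := by
  refine h.of_inv (closure_top h.1 (mem2 _ _) (mem1 _ _)) ?_
  rw [isConj_iff]; exact ⟨1, by simp only [cm]; group⟩

lemma P.flip {C x y : G} (h : P C x y) : P C x⁻¹ y := by
  refine h.of_inv (closure_top h.1 ?_ (mem2 _ _)) ?_
  · rw [← inv_mem_iff]; exact mem1 _ _
  · rw [isConj_iff]; exact ⟨x, by simp only [cm]; group⟩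

lemma P.slide {C x y : G} (h : P C x y) : P C x⁻¹ (x⁻¹ * y) := by
  have m : x ∈ Subgroup.closure {x⁻¹, x⁻¹ * y} := by rw [← inv_mem_iff]; exact mem1 _ _
  refine h.of_inv (closure_top h.1 m ?_) ?_
  · have := mul_mem m (mem2 x⁻¹ (x⁻¹ * y))
    rwa [mul_inv_cancel_left] at this
  · rw [isConj_iff]; exact ⟨x, by simp only [cm]; group⟩

lemma P.conj {C x y : G} (h : P C x y) (g : G) : P C (g⁻¹ * x * g) (g⁻¹ * y * g) := by
  refine ⟨?_, ?_⟩
  · have e : ({g⁻¹ * x * g, g⁻¹ * y * g} : Set G) = (MulAut.conj g⁻¹).toMonoidHom '' {x, y} := by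
      rw [Set.image_pair]; simp
    rw [e, ← MonoidHom.map_closure, h.1]
    exact Subgroup.map_top_of_surjective _ (MulAut.conj g⁻¹).surjective
  · have : IsConj (cm x y) (cm (g⁻¹ * x * g) (g⁻¹ * y * g)) := by
      rw [isConj_iff]; exact ⟨g⁻¹, by simp only [cm]; group⟩
    rcases h.2 with h | h
    · left; exact h.trans this
    · right; exact h.trans (conj_inv this)

lemma P.ne_one {C x y : G} (h : P C x y) : x ≠ 1 := by
  rintro rfl
  have hz : ∀ g : G, g ∈ Subgroup.zpowers y := by
    intro g
    have hg : g ∈ Subgroup.closure {1, y} := by rw [h.1]; trivial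
    revert g
    change Subgroup.closure {1, y} ≤ _
    rw [Subgroup.closure_le]
    rintro z (rfl | rfl)
    · exact one_mem _
    · exact Subgroup.mem_zpowers _
  obtain ⟨k, hk⟩ := hz (FreeGroup.of 0)
  obtain ⟨l, hl⟩ := hz (FreeGroup.of 1)
  have : (FreeGroup.of 0 : G) * FreeGroup.of 1 = FreeGroup.of 1 * FreeGroup.of 0 := by
    rw [← hk, ← hl]; simp only [← zpow_add, add_comm]
  revert this
  decide

/-- the triple version -/
def T (C : G) (t : Fin 3 → G) : Prop := P C ((t 0)⁻¹ * t 1) ((t 0)⁻¹ * t 2)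

lemma T.left {C : G} {t : Fin 3 → G} (h : T C t) (g : G) : T C (fun i => g * t i) := by
  unfold T at *
  convert h using 1 <;> group

lemma T.right {C : G} {t : Fin 3 → G} (h : T C t) (g : G) : T C (fun i => t i * g) := by
  unfold T at *
  convert h.conj g using 1 <;> group

/-- norm of a triple -/
def nm (t : Fin 3 → G) : ℕ := (t 0).norm + (t 1).norm + (t 2).norm

lemma min_hd {C : G} {t : Fin 3 → G} (h : T C t) (hm : ∀ t', T C t' → nm t ≤ nm t')
    (i j : Fin 3) (hij : i ≠ j) (hi : t i ≠ 1) : hd (t i) ≠ hd (t j) := by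
  intro e
  obtain ⟨s, hs⟩ := Option.ne_none_iff_exists'.1 (fun h => hi (hd_eq_none.1 h))
  have hs' := e ▸ hs
  have := hm _ (h.left (lt s)⁻¹)
  have a := norm_lt_inv_mul hs
  have b := norm_lt_inv_mul hs'
  have c := fun k => norm_lt_inv_mul_le (t k) s
  have c0 := c 0
  have c1 := c 1
  have c2 := c 2
  simp only [nm] at this
  fin_cases i <;> fin_cases j <;> simp at hij a b <;> omega

lemma min_hd_inv {C : G} {t : Fin 3 → G} (h : T C t) (hm : ∀ t', T C t' → nm t ≤ nm t')
    (i j : Fin 3) (hij : i ≠ j) (hi : t i ≠ 1) : hd (t i)⁻¹ ≠ hd (t j)⁻¹ := by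
  intro e
  obtain ⟨s, hs⟩ := Option.ne_none_iff_exists'.1
    (fun h => hi (inv_eq_one.1 (hd_eq_none.1 h)))
  have hs' := e ▸ hs
  have := hm _ (h.right (lt s))
  have a := norm_lt_inv_mul hs
  have b := norm_lt_inv_mul hs'
  have c := fun k => norm_lt_inv_mul_le (t k)⁻¹ s
  simp only [← mul_inv_rev, FreeGroup.norm_inv_eq] at a b c
  have c0 := c 0
  have c1 := c 1
  have c2 := c 2
  simp only [nm] at this
  fin_cases i <;> fin_cases j <;> simp at hij a b <;> omega

lemma exists_rose_min {C x y : G} (h : P C x y) :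
    ∃ v w, P C v w ∧ ∀ t', T C t' → v.norm + w.norm ≤ nm t' := by
  classical
  have hex : ∃ n, ∃ t, T C t ∧ nm t = n := ⟨_, ![1, x, y], by simpa [T] using h, rfl⟩
  obtain ⟨t, ht, hn⟩ := Nat.find_spec hex
  have hm : ∀ t', T C t' → nm t ≤ nm t' := by
    intro t' ht'
    rw [hn]
    exact Nat.find_min' hex ⟨t', ht', rfl⟩
  by_cases h1 : ∀ i, t i ≠ 1
  · exact (theta_false h1 (fun i j hij => min_hd ht hm i j hij (h1 i))
      (fun i j hij => min_hd_inv ht hm i j hij (h1 i)) ht.1).elim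
  · push Not at h1
    obtain ⟨i, hi⟩ := h1
    unfold T at ht
    fin_cases i
    · simp only [Fin.zero_eta, Fin.mk_one, Fin.reduceFinMk] at hi
      refine ⟨t 1, t 2, by simpa [hi] using ht, fun t' ht' => ?_⟩
      have := hm t' ht'
      simpa [nm, hi] using this
    · simp only [Fin.zero_eta, Fin.mk_one, Fin.reduceFinMk] at hi
      refine ⟨t 0, t 2, ?_, fun t' ht' => ?_⟩
      · have := ht.slide
        simpa [hi] using this
      · have := hm t' ht'
        simpa [nm, hi] using this
    · simp only [Fin.zero_eta, Fin.mk_one, Fin.reduceFinMk] at hi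
      refine ⟨t 0, t 1, ?_, fun t' ht' => ?_⟩
      · have := ht.swap.slide
        simpa [hi] using this
      · have := hm t' ht'
        simpa [nm, hi] using this

lemma rose_min_hd {C v w : G} (h : P C v w) (hm : ∀ t', T C t' → v.norm + w.norm ≤ nm t') :
    hd v ≠ hd w ∧ hd v⁻¹ ≠ hd w⁻¹ := by
  have ht : T C ![1, v, w] := by simpa [T] using h
  have hn : nm ![1, v, w] = v.norm + w.norm := by simp [nm]
  rw [← hn] at hm
  exact ⟨min_hd ht hm 1 2 (by decide) h.ne_one, min_hd_inv ht hm 1 2 (by decide) h.ne_one⟩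

lemma nielsen {C x y : G} (h : P C x y) : P C genA genB := by
  obtain ⟨v, w, hp, hm⟩ := exists_rose_min h
  have c1 := rose_min_hd hp hm
  have c2 := rose_min_hd hp.flip (by simpa using hm)
  rw [inv_inv] at c2
  have hr := rose (v := fun b => cond b w v)
    (by intro i; cases i; exacts [hp.ne_one, hp.swap.ne_one])
    (by
      intro i; cases i
      · exact ⟨c1.1, c2.1, c2.2, c1.2⟩
      · exact ⟨c1.1.symm, c2.2.symm, c2.1.symm, c1.2.symm⟩) hp.1
  obtain ⟨i, hi⟩ := hr (0, true)
  obtain ⟨j, hj⟩ := hr (1, true)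
  have ea : lt (0, true) = genA := by simp [lt, genA, FreeGroup.of]
  have eb : lt (1, true) = genB := by simp [lt, genB, FreeGroup.of]
  have n1 : genA ≠ genB := by decide
  have n2 : genA ≠ genB⁻¹ := by decide
  rw [ea] at hi
  rw [eb] at hj
  have flip2 : ∀ {x y : G}, P C x y → P C x y⁻¹ := fun h => h.swap.flip.swap
  have n3 : genA⁻¹ ≠ genB := by decide
  cases i <;> cases j <;> simp only [cond] at hi hj
  · exfalso
    rcases hi with hi | hi <;> rcases hj with hj | hj <;> simp_all
  · rcases hi with hi | hi <;> rcases hj with hj | hj <;> rw [hi, hj]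
    exacts [hp, flip2 hp, hp.flip, flip2 hp.flip]
  · rcases hi with hi | hi <;> rcases hj with hj | hj <;> rw [hi, hj]
    exacts [hp.swap, flip2 hp.swap, hp.swap.flip, flip2 hp.swap.flip]
  · exfalso
    rcases hi with hi | hi <;> rcases hj with hj | hj <;> simp_all

lemma center_trivial {g : G} (h : ∀ x : G, g * x = x * g) : g = 1 := by
  by_contra hg
  obtain ⟨r, hr⟩ := Option.ne_none_iff_exists'.1 (fun h => hg (hd_eq_none.1 h))
  have hne : r.1 + 1 ≠ r.1 := by
    generalize r.1 = z
    revert z; decide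
  obtain ⟨e, he⟩ : ∃ e : Bool, hd g⁻¹ ≠ some (r.1 + 1, e) := by
    by_cases h1 : hd g⁻¹ = some (r.1 + 1, true)
    · exact ⟨false, by rw [h1]; simp⟩
    · exact ⟨true, h1⟩
  have a : hd (g * lt (r.1 + 1, e)) = hd g := hd_mul_of hg (by rw [hd_lt]; exact he)
  have b : hd (lt (r.1 + 1, e) * g) = hd (lt (r.1 + 1, e)) :=
    hd_mul_of (lt_ne_one _) (by
      rw [lt_inv, hd_lt, hr]
      intro hh
      rw [Option.some.injEq] at hh
      exact hne (congrArg Prod.fst hh))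
  rw [h, b, hd_lt, hr, Option.some.injEq] at a
  exact hne (congrArg Prod.fst a)

lemma fst_center (Ψ : MulAut F2xZ) (z : Multiplicative ℤ) : (Ψ (1, z)).1 = 1 := by
  apply center_trivial
  intro x
  obtain ⟨y, hy⟩ := Ψ.surjective (x, 1)
  have : Ψ (1, z) * Ψ y = Ψ y * Ψ (1, z) := by
    rw [← map_mul, ← map_mul]
    congr 1
    ext
    · simp
    · simp [mul_comm]
  rw [hy] at this
  exact congrArg Prod.fst this

lemma sq_center (Ψ : MulAut F2xZ) (n : ℤ) :
    Ψ (Ψ (1, Multiplicative.ofAdd n)) = (1, Multiplicative.ofAdd n) := by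
  have key : ∀ Θ : MulAut F2xZ, ∃ m : ℤ, ∀ k : ℤ,
      Θ (1, Multiplicative.ofAdd k) = (1, Multiplicative.ofAdd (k * m)) := by
    intro Θ
    refine ⟨(Θ (1, Multiplicative.ofAdd 1)).2.toAdd, fun k => ?_⟩
    have e : ((1, Multiplicative.ofAdd k) : F2xZ) = (1, Multiplicative.ofAdd 1) ^ k := by
      ext
      · simp
      · simp [← ofAdd_zsmul]
    rw [e, map_zpow]
    ext
    · simp [fst_center]
    · simp [ofAdd_zsmul, mul_comm k]
  obtain ⟨m, hm⟩ := key Ψ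
  obtain ⟨m', hm'⟩ := key Ψ⁻¹
  have h1 : Ψ⁻¹ (Ψ (1, Multiplicative.ofAdd 1)) = (1, Multiplicative.ofAdd 1) :=
    MulAut.inv_apply_self _ _ _
  rw [hm, hm', Prod.mk.injEq] at h1
  have h2 : m * m' = 1 := by
    have := Multiplicative.ofAdd.injective h1.2
    rwa [one_mul] at this
  rw [hm, hm]
  rcases Int.eq_one_or_neg_one_of_mul_eq_one h2 with rfl | rfl <;> simp

/-- induced endomorphism of the free group -/
def ind (Ψ : MulAut F2xZ) : G →* G :=
  (MonoidHom.fst G (Multiplicative ℤ)).comp (Ψ.toMonoidHom.comp (MonoidHom.inl G (Multiplicative ℤ)))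

lemma ind_fst (Ψ : MulAut F2xZ) (p : F2xZ) : (Ψ p).1 = ind Ψ p.1 := by
  have e : p = (p.1, 1) * (1, p.2) := by ext <;> simp
  conv_lhs => rw [e, map_mul, Prod.fst_mul, fst_center, mul_one]
  rfl

lemma ind_surj (Ψ : MulAut F2xZ) : Function.Surjective (ind Ψ) := by
  intro x
  obtain ⟨y, hy⟩ := Ψ.surjective (x, 1)
  exact ⟨y.1, by rw [← ind_fst, hy]⟩

lemma ind_cm (Ψ : MulAut F2xZ) :
    IsConj (ind Ψ (cm genA genB)) (cm genA genB) ∨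
      IsConj (ind Ψ (cm genA genB)) (cm genA genB)⁻¹ := by
  have hP : P (ind Ψ (cm genA genB)) (ind Ψ genA) (ind Ψ genB) := by
    refine ⟨?_, Or.inl ?_⟩
    · have e : ({ind Ψ genA, ind Ψ genB} : Set G) = ind Ψ '' {genA, genB} := by
        rw [Set.image_pair]
      have e2 : ({genA, genB} : Set G) = Set.range FreeGroup.of := by
        ext z
        simp only [Set.mem_insert_iff, Set.mem_singleton_iff, Set.mem_range, Fin.exists_fin_two]
        simp only [genA, genB, eq_comm]
      rw [e, ← MonoidHom.map_closure, e2, FreeGroup.closure_range_of]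
      exact Subgroup.map_top_of_surjective _ (ind_surj Ψ)
    · have : ind Ψ (cm genA genB) = cm (ind Ψ genA) (ind Ψ genB) := by simp [cm]
      rw [this]
  exact (nielsen hP).2

lemma ind_sq_cm (Ψ : MulAut F2xZ) :
    IsConj (ind Ψ (ind Ψ (cm genA genB))) (cm genA genB) := by
  rcases ind_cm Ψ with h | h
  · exact ((ind Ψ).map_isConj h).trans h
  · have h1 := (ind Ψ).map_isConj h
    rw [map_inv] at h1
    have h2 := conj_inv h
    rw [inv_inv] at h2
    exact h1.trans h2

end F2Nielsen

open F2Nielsen in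
/-- For any automorphism `Ψ` of `F₂ × ℤ` there is an automorphism `Φ` with
`[Φ] = [Ψ²]` in `Out(F₂ × ℤ)`, fixing the central `ℤ` pointwise, whose induced
automorphism of `F₂` fixes the commutator `[a,b]`. -/
theorem aut_F2xZ_good_representative (Ψ : MulAut F2xZ) :
    ∃ (Φ : MulAut F2xZ) (h : F2xZ),
      (∀ x : F2xZ, Φ x = h⁻¹ * Ψ (Ψ x) * h) ∧
      (∀ n : ℤ, Φ (1, Multiplicative.ofAdd n) = (1, Multiplicative.ofAdd n)) ∧
      (Φ ((genA⁻¹ * genB⁻¹ * genA * genB : FreeGroup (Fin 2)), 1)).1 =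
        genA⁻¹ * genB⁻¹ * genA * genB := by
  obtain ⟨c, hc⟩ := isConj_iff.1 (ind_sq_cm Ψ)
  have hΦ : ∀ x : F2xZ, (MulAut.conj ((c, 1) : F2xZ) * (Ψ * Ψ)) x =
      ((c⁻¹, 1) : F2xZ)⁻¹ * Ψ (Ψ x) * ((c⁻¹, 1) : F2xZ) := by
    intro x
    simp [MulAut.mul_apply, MulAut.conj_apply]
  refine ⟨MulAut.conj ((c, 1) : F2xZ) * (Ψ * Ψ), (c⁻¹, 1), hΦ, ?_, ?_⟩
  · intro n
    rw [hΦ, sq_center]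
    ext <;> simp
  · rw [hΦ]
    simp only [Prod.fst_mul, Prod.fst_inv, inv_inv]
    rw [ind_fst, ind_fst]
    exact hc
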